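/- For sufficiently large ρ the following holds: if V ∈ 𝒱(r,n) with 1 ≤ n ≤ d and ξ ∈ Ξ₂(V), then |ξ_V| ≤ 2ρ^{(α₁+α₂)/2} in the case n = 1, and |ξ_V| ≤ 2ρ^{α_n} in the case 2 ≤ n ≤ d. -/

import Mathlib

noncomputable section

open Set Submodule Module MeasureTheory Relation
open scoped RealInnerProductSpace

variable {d : ℕ}

/-- The lattice Γ generated over ℤ by the basis `B` of ℝ^d. -/
def latticeOf (B : Basis (Fin d) ℝ (EuclideanSpace ℝ (Fin d))) :
    Submodule ℤ (EuclideanSpace ℝ (Fin d)) :=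
  Submodule.span ℤ (Set.range B)

/-- The determinant d(Γ) of the lattice generated by `B`. -/
def latDet (B : Basis (Fin d) ℝ (EuclideanSpace ℝ (Fin d))) : ℝ :=
  |(EuclideanSpace.basisFun (Fin d) ℝ).toBasis.det (fun i => B i)|

/-- The dual lattice Γ† = {θ : θ·g ∈ 2πℤ for all g ∈ Γ}. -/
def dualLattice (B : Basis (Fin d) ℝ (EuclideanSpace ℝ (Fin d))) :
    Set (EuclideanSpace ℝ (Fin d)) :=
  {θ | ∀ g ∈ latticeOf B, ∃ k : ℤ, ⟪θ, g⟫ = 2 * Real.pi * k}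

/-- Θ_r : nonzero dual lattice vectors of norm at most r. -/
def Theta (B : Basis (Fin d) ℝ (EuclideanSpace ℝ (Fin d))) (r : ℝ) :
    Set (EuclideanSpace ℝ (Fin d)) :=
  {θ | θ ∈ dualLattice B ∧ θ ≠ 0 ∧ ‖θ‖ ≤ r}

/-- Θ_r⁰ : dual lattice vectors of norm at most r (including 0). -/
def Theta0 (B : Basis (Fin d) ℝ (EuclideanSpace ℝ (Fin d))) (r : ℝ) :
    Set (EuclideanSpace ℝ (Fin d)) :=
  {θ | θ ∈ dualLattice B ∧ ‖θ‖ ≤ r}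

/-- A lattice r-subspace: a subspace spanned by dual lattice vectors from Θ_r⁰. -/
def IsLatticeSubspace (B : Basis (Fin d) ℝ (EuclideanSpace ℝ (Fin d))) (r : ℝ)
    (V : Submodule ℝ (EuclideanSpace ℝ (Fin d))) : Prop :=
  ∃ S : Set (EuclideanSpace ℝ (Fin d)), S ⊆ Theta0 B r ∧ V = Submodule.span ℝ S

/-- Orthogonal projection ξ_V onto a subspace, viewed in the ambient space. -/
def projV (V : Submodule ℝ (EuclideanSpace ℝ (Fin d))) (ξ : EuclideanSpace ℝ (Fin d)) :
    EuclideanSpace ℝ (Fin d) :=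
  (orthogonalProjection V ξ : EuclideanSpace ℝ (Fin d))

/-- ω_n: the volume of the unit ball in ℝ^n. -/
def unitBallVol (n : ℕ) : ℝ :=
  (MeasureTheory.volume (Metric.ball (0 : EuclideanSpace ℝ (Fin n)) 1)).toReal

/-- The resonant layer Λ(θ) (= ℝ^d when θ = 0). -/
def layer (ρ a : ℝ) (θ : EuclideanSpace ℝ (Fin d)) : Set (EuclideanSpace ℝ (Fin d)) :=
  {ξ | θ = 0 ∨ |⟪ξ, θ⟫| < ρ ^ a * ‖θ‖}

/-- Υ_θ(ξ): the points θ-resonant congruent to ξ. -/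
def upsTheta (ρ a : ℝ) (θ ξ : EuclideanSpace ℝ (Fin d)) : Set (EuclideanSpace ℝ (Fin d)) :=
  {η | ξ ∈ layer ρ a θ ∧ η ∈ layer ρ a θ ∧ ∃ l : ℤ, ξ - η = (l : ℝ) • θ}

/-- One step of resonant congruence (with some θ ∈ Θ_r⁰). -/
def resStep (B : Basis (Fin d) ℝ (EuclideanSpace ℝ (Fin d))) (ρ a r : ℝ)
    (ξ η : EuclideanSpace ℝ (Fin d)) : Prop :=
  ∃ θ ∈ Theta0 B r, η ∈ upsTheta ρ a θ ξ

/-- Υ(ξ): all points resonant congruent to ξ. -/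
def Ups (B : Basis (Fin d) ℝ (EuclideanSpace ℝ (Fin d))) (ρ a r : ℝ)
    (ξ : EuclideanSpace ℝ (Fin d)) : Set (EuclideanSpace ℝ (Fin d)) :=
  {η | Relation.ReflTransGen (resStep B ρ a r) ξ η}

/-- N(ξ) = Υ(ξ) − ξ. -/
def resN (B : Basis (Fin d) ℝ (EuclideanSpace ℝ (Fin d))) (ρ a r : ℝ)
    (ξ : EuclideanSpace ℝ (Fin d)) : Set (EuclideanSpace ℝ (Fin d)) :=
  {m | ξ + m ∈ Ups B ρ a r ξ}

/-- Ξ₁(V) = {ξ : |ξ_V| < ρ^{α_n}}, n = dim V. -/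
def Xi1 (ρ : ℝ) (α : ℕ → ℝ) (V : Submodule ℝ (EuclideanSpace ℝ (Fin d))) :
    Set (EuclideanSpace ℝ (Fin d)) :=
  {ξ | ‖projV V ξ‖ < ρ ^ α (Module.finrank ℝ V)}

/-- Ξ₂(V) = ∪_{ξ ∈ Ξ₁(V)} Υ(ξ). -/
def Xi2 (B : Basis (Fin d) ℝ (EuclideanSpace ℝ (Fin d))) (ρ r : ℝ) (α : ℕ → ℝ)
    (V : Submodule ℝ (EuclideanSpace ℝ (Fin d))) : Set (EuclideanSpace ℝ (Fin d)) :=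
  {η | ∃ ξ ∈ Xi1 ρ α V, η ∈ Ups B ρ (α 1) r ξ}

/-- Ξ(V): Ξ₂(V) minus the Ξ₂(W) for all lattice r-subspaces W of larger dimension. -/
def Xi (B : Basis (Fin d) ℝ (EuclideanSpace ℝ (Fin d))) (ρ r : ℝ) (α : ℕ → ℝ)
    (V : Submodule ℝ (EuclideanSpace ℝ (Fin d))) : Set (EuclideanSpace ℝ (Fin d)) :=
  Xi2 B ρ r α V \
    ⋃ W ∈ {W : Submodule ℝ (EuclideanSpace ℝ (Fin d)) |
        IsLatticeSubspace B r W ∧ Module.finrank ℝ V < Module.finrank ℝ W},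
      Xi2 B ρ r α W

/-- The standing conditions on the parameters ρ ≥ 1, r, κ > 0 and the exponents α_j:
0 = α₀, α_{n+1} > α_n + 2κd², α_d < 1, r ≤ ρ^κ, and r ≥ r₀ (i.e. Θ_r⁰ spans ℝ^d). -/
def GoodParams (B : Basis (Fin d) ℝ (EuclideanSpace ℝ (Fin d))) (ρ r κ : ℝ)
    (α : ℕ → ℝ) : Prop :=
  1 ≤ ρ ∧ 0 < κ ∧ α 0 = 0 ∧ (∀ n < d, α n + 2 * κ * (d : ℝ) ^ 2 < α (n + 1)) ∧
    α d < 1 ∧ r ≤ ρ ^ κ ∧ Submodule.span ℝ (Theta0 B r) = ⊤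


section PairingBound

variable {E : Type*} [NormedAddCommGroup E] [InnerProductSpace ℝ E]

/-- The orthogonal projection of `ξ` onto `U` has norm at most `f`, stated through pairings. -/
def PairingBound (U : Submodule ℝ E) (f : ℝ) (ξ : E) : Prop :=
  ∀ y ∈ U, |⟪ξ, y⟫| ≤ f * ‖y‖

lemma PairingBound.mono {U : Submodule ℝ E} {f g : ℝ} {ξ : E} (h : PairingBound U f ξ)
    (hfg : f ≤ g) : PairingBound U g ξ :=
  fun y hy => (h y hy).trans (by gcongr)

lemma PairingBound.norm_sub_le {U : Submodule ℝ E} {f : ℝ} {ξ η : E} (hf : 0 ≤ f)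
    (hξ : PairingBound U f ξ) (hη : PairingBound U f η) (h : ξ - η ∈ U) :
    ‖ξ - η‖ ≤ 2 * f := by
  have h1 := hξ _ h
  have h2 := hη _ h
  have h3 : ‖ξ - η‖ * ‖ξ - η‖ = ⟪ξ, ξ - η⟫ - ⟪η, ξ - η⟫ := by
    rw [← inner_sub_left, real_inner_self_eq_norm_mul_norm]
  have h4 : ‖ξ - η‖ * ‖ξ - η‖ ≤ 2 * f * ‖ξ - η‖ := by
    have := abs_le.1 h1
    have := abs_le.1 h2
    linarith
  rcases (norm_nonneg (ξ - η)).eq_or_lt with h0 | h0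
  · rw [← h0]; positivity
  · exact le_of_mul_le_mul_right h4 h0

/-- Adding one vector `θ`, quantitatively transversal to `U`, to a subspace. -/
lemma PairingBound.span_insert [FiniteDimensional ℝ E] {S : Set E} {θ ξ : E} {f a R K : ℝ}
    (hf : 0 ≤ f) (hθR : ‖θ‖ ≤ R) (hK : 0 ≤ K)
    (hdist : ∀ w ∈ Submodule.span ℝ S, 1 ≤ K * ‖θ - w‖)
    (hξ : PairingBound (Submodule.span ℝ S) f ξ) (hθ : |⟪ξ, θ⟫| ≤ a) :
    PairingBound (Submodule.span ℝ (insert θ S)) (f + K * (a + f * R)) ξ := by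
  intro y hy
  set W := Submodule.span ℝ S
  set p : E := W.starProjection θ
  have hpW : p ∈ W := W.starProjection_apply_mem θ
  have hu : ∀ w ∈ W, ⟪w, θ - p⟫ = 0 := fun w hw =>
    (Submodule.mem_orthogonal W _).1 (W.sub_starProjection_mem_orthogonal θ) w hw
  have hpn : ‖p‖ ≤ R := (W.norm_starProjection_apply_le θ).trans hθR
  obtain ⟨t, z, hz, rfl⟩ := Submodule.mem_span_insert.1 hy
  have hdecomp : t • θ + z = (z + t • p) + t • (θ - p) := by
    rw [smul_sub]; abel
  have hwW : z + t • p ∈ W := W.add_mem hz (W.smul_mem t hpW)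
  have horth : ⟪z + t • p, t • (θ - p)⟫ = 0 := by
    rw [inner_smul_right, hu _ hwW, mul_zero]
  have hpyth := norm_add_sq_eq_norm_sq_add_norm_sq_real horth
  rw [← hdecomp] at hpyth
  have hw_le : ‖z + t • p‖ ≤ ‖t • θ + z‖ := by
    apply abs_le_of_sq_le_sq' _ (norm_nonneg _) |>.2
    nlinarith [mul_self_nonneg ‖t • (θ - p)‖]
  have hu_le : |t| * ‖θ - p‖ ≤ ‖t • θ + z‖ := by
    rw [← Real.norm_eq_abs, ← norm_smul]
    apply abs_le_of_sq_le_sq' _ (norm_nonneg _) |>.2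
    nlinarith [mul_self_nonneg ‖z + t • p‖]
  have ht : |t| ≤ K * ‖t • θ + z‖ := by
    calc |t| = |t| * 1 := (mul_one _).symm
      _ ≤ |t| * (K * ‖θ - p‖) := by gcongr; exact hdist p hpW
      _ = K * (|t| * ‖θ - p‖) := by ring
      _ ≤ K * ‖t • θ + z‖ := by gcongr
  have hξu : |⟪ξ, θ - p⟫| ≤ a + f * R := by
    rw [inner_sub_right]
    calc |⟪ξ, θ⟫ - ⟪ξ, p⟫| ≤ |⟪ξ, θ⟫| + |⟪ξ, p⟫| := abs_sub _ _
      _ ≤ a + f * R := by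
        gcongr
        exact (hξ p hpW).trans (by gcongr)
  have hpos : 0 ≤ a + f * R := (abs_nonneg _).trans hξu
  calc |⟪ξ, t • θ + z⟫| = |⟪ξ, z + t • p⟫ + t * ⟪ξ, θ - p⟫| := by
        rw [hdecomp, inner_add_right, inner_smul_right ξ (θ - p)]
    _ ≤ |⟪ξ, z + t • p⟫| + |t * ⟪ξ, θ - p⟫| := abs_add_le _ _
    _ = |⟪ξ, z + t • p⟫| + |t| * |⟪ξ, θ - p⟫| := by rw [abs_mul]
    _ ≤ f * ‖t • θ + z‖ + (K * ‖t • θ + z‖) * (a + f * R) := by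
        gcongr
        exact (hξ _ hwW).trans (by gcongr)
    _ = (f + K * (a + f * R)) * ‖t • θ + z‖ := by ring

end PairingBound

/-- The determinant of the pairings with the basis `B`, normalised to be integral on tuples of
dual lattice vectors. -/
def pairingDet (B : Basis (Fin d) ℝ (EuclideanSpace ℝ (Fin d))) :
    EuclideanSpace ℝ (Fin d) [⋀^Fin d]→ₗ[ℝ] ℝ :=
  Matrix.detRowAlternating.compLinearMap
    (LinearMap.pi fun j => (2 * Real.pi)⁻¹ • (innerₗ (EuclideanSpace ℝ (Fin d)) (B j)))

lemma pairingDet_apply (B : Basis (Fin d) ℝ (EuclideanSpace ℝ (Fin d)))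
    (v : Fin d → EuclideanSpace ℝ (Fin d)) :
    pairingDet B v = Matrix.det (Matrix.of fun i j => (2 * Real.pi)⁻¹ * ⟪B j, v i⟫) :=
  rfl

lemma continuous_pairingDet (B : Basis (Fin d) ℝ (EuclideanSpace ℝ (Fin d))) :
    Continuous (pairingDet B) := by
  refine Continuous.matrix_det (A := fun v : Fin d → EuclideanSpace ℝ (Fin d) =>
    Matrix.of fun i j => (2 * Real.pi)⁻¹ * ⟪B j, v i⟫) ?_
  refine continuous_matrix fun i j => ?_
  simp only [Matrix.of_apply]
  fun_prop

lemma pairingDet_ne_zero (B : Basis (Fin d) ℝ (EuclideanSpace ℝ (Fin d)))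
    {v : Fin d → EuclideanSpace ℝ (Fin d)} (hv : Submodule.span ℝ (Set.range v) = ⊤) :
    pairingDet B v ≠ 0 := by
  rw [pairingDet_apply]
  intro h
  obtain ⟨x, hx0, hx⟩ := Matrix.exists_mulVec_eq_zero_iff.2 h
  apply hx0
  have hi : ∀ i, ⟪∑ j, x j • B j, v i⟫ = 0 := by
    intro i
    have := congrFun hx i
    simp only [Matrix.mulVec, dotProduct, Matrix.of_apply, Pi.zero_apply] at this
    rw [sum_inner]
    have hpi : (2 * Real.pi)⁻¹ ≠ 0 := by positivity
    apply (mul_eq_zero.1 _).resolve_left hpi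
    rw [← this, Finset.mul_sum]
    refine Finset.sum_congr rfl fun j _ => ?_
    rw [real_inner_smul_left]; ring
  have hker : Submodule.span ℝ (Set.range v) ≤
      LinearMap.ker (innerₗ (EuclideanSpace ℝ (Fin d)) (∑ j, x j • B j)) := by
    rw [Submodule.span_le]
    rintro _ ⟨i, rfl⟩
    exact hi i
  have hzero : ∑ j, x j • B j = 0 := by
    have : ∑ j, x j • B j ∈ Submodule.span ℝ (Set.range v) := hv ▸ Submodule.mem_top
    exact inner_self_eq_zero.1 (hker this)
  funext j
  exact (Fintype.linearIndependent_iff.1 B.linearIndependent) x hzero j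

lemma one_le_abs_pairingDet (B : Basis (Fin d) ℝ (EuclideanSpace ℝ (Fin d)))
    {v : Fin d → EuclideanSpace ℝ (Fin d)} (hv : Submodule.span ℝ (Set.range v) = ⊤)
    (hvB : ∀ i, v i ∈ dualLattice B) : 1 ≤ |pairingDet B v| := by
  have hk : ∀ i j, ∃ k : ℤ, (2 * Real.pi)⁻¹ * ⟪B j, v i⟫ = k := by
    intro i j
    obtain ⟨k, hk⟩ := hvB i (B j) (Submodule.subset_span ⟨j, rfl⟩)
    refine ⟨k, ?_⟩
    rw [real_inner_comm, hk]
    field_simp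
  choose k hk using hk
  have hdet : pairingDet B v = ((Matrix.of k).det : ℤ) := by
    rw [pairingDet_apply, Int.cast_det]
    congr 1
    ext i j
    exact hk i j
  have hne := pairingDet_ne_zero B hv
  rw [hdet] at hne ⊢
  exact_mod_cast Int.one_le_abs (by exact_mod_cast hne)

/-- A vector of `Θ_r⁰` outside a lattice `r`-subspace stays quantitatively away from it. -/
lemma exists_one_le_mul_norm_sub (B : Basis (Fin d) ℝ (EuclideanSpace ℝ (Fin d))) :
    ∃ C : ℝ, 1 ≤ C ∧ ∀ r R : ℝ, r ≤ R → 1 ≤ R → Submodule.span ℝ (Theta0 B r) = ⊤ →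
      ∀ S ⊆ Theta0 B r, ∀ θ ∈ Theta0 B r, θ ∉ Submodule.span ℝ S →
        ∀ w ∈ Submodule.span ℝ S, 1 ≤ C * R ^ (d - 1) * ‖θ - w‖ := by
  obtain ⟨C, hC, hbound⟩ := (pairingDet B).toMultilinearMap.exists_bound_of_continuous
    (continuous_pairingDet B)
  refine ⟨max C 1, le_max_right _ _, ?_⟩
  intro r R hrR hR hspan S hS θ hθ hθS w hw
  obtain ⟨b, hbS, hSb, hb⟩ := exists_linearIndependent ℝ S
  have hins : LinearIndepOn ℝ id (insert θ b) :=
    LinearIndepOn.id_insert hb (by rwa [hSb])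
  have hsub : insert θ b ⊆ Theta0 B r := Set.insert_subset hθ (hbS.trans hS)
  set c := hins.extend hsub
  have hcT : c ⊆ Theta0 B r := hins.extend_subset hsub
  have hbc : insert θ b ⊆ c := hins.subset_extend hsub
  have hcspan : Submodule.span ℝ c = ⊤ := by
    rw [eq_top_iff, ← hspan, Submodule.span_le]
    exact hins.subset_span_extend hsub
  have hcli : LinearIndependent ℝ ((↑) : c → EuclideanSpace ℝ (Fin d)) :=
    hins.linearIndepOn_extend hsub
  let e0 : Basis c ℝ (EuclideanSpace ℝ (Fin d)) :=
    Basis.mk hcli (by rw [Subtype.range_coe, hcspan])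
  let e : c ≃ Fin d := e0.indexEquiv B
  let v : Fin d → EuclideanSpace ℝ (Fin d) := fun i => (e.symm i : EuclideanSpace ℝ (Fin d))
  have hvr : Set.range v = c := by
    have : v = Subtype.val ∘ e.symm := rfl
    rw [this, Set.range_comp, e.symm.range_eq_univ, Set.image_univ, Subtype.range_coe]
  have hvT : ∀ i, v i ∈ Theta0 B r := fun i => hcT (e.symm i).2
  have hdet := one_le_abs_pairingDet B (v := v) (by rw [hvr, hcspan]) fun i => (hvT i).1
  let i₀ : Fin d := e ⟨θ, hbc (Set.mem_insert _ _)⟩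
  have hvi : v i₀ = θ := by simp [v, i₀]
  have hker : Submodule.span ℝ b ≤
      LinearMap.ker ((pairingDet B).toMultilinearMap.toLinearMap v i₀) := by
    rw [Submodule.span_le]
    intro x hx
    let j : Fin d := e ⟨x, hbc (Set.mem_insert_of_mem _ hx)⟩
    have hvj : v j = x := by simp [v, j]
    have hne : j ≠ i₀ := by
      rintro h
      apply hθS
      rw [← hvi, ← h, hvj, ← hSb]
      exact Submodule.subset_span hx
    refine (pairingDet B).map_eq_zero_of_eq _ (i := j) (j := i₀) ?_ hne
    rw [Function.update_self, Function.update_of_ne hne, hvj]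
  have hw0 : pairingDet B (Function.update v i₀ w) = 0 := hker (hSb ▸ hw)
  have hrow : pairingDet B (Function.update v i₀ (θ - w)) = pairingDet B v := by
    rw [AlternatingMap.map_update_sub, hw0, sub_zero, ← hvi, Function.update_eq_self]
  have hb2 := hbound (Function.update v i₀ (θ - w))
  have hprod : ∏ i, ‖Function.update v i₀ (θ - w) i‖ ≤ ‖θ - w‖ * R ^ (d - 1) := by
    rw [← Finset.mul_prod_erase Finset.univ _ (Finset.mem_univ i₀), Function.update_self]
    gcongr
    calc ∏ i ∈ Finset.univ.erase i₀, ‖Function.update v i₀ (θ - w) i‖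
        ≤ ∏ _i ∈ Finset.univ.erase i₀, R := by
          refine Finset.prod_le_prod (fun _ _ => norm_nonneg _) fun i hi => ?_
          rw [Function.update_of_ne (Finset.ne_of_mem_erase hi)]
          exact (hvT i).2.trans hrR
      _ = R ^ (d - 1) := by simp
  calc 1 ≤ |pairingDet B v| := hdet
    _ = ‖pairingDet B (Function.update v i₀ (θ - w))‖ := by rw [hrow, Real.norm_eq_abs]
    _ ≤ C * ∏ i, ‖Function.update v i₀ (θ - w) i‖ := hb2
    _ ≤ max C 1 * (‖θ - w‖ * R ^ (d - 1)) := by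
        gcongr
        exact le_max_left _ _
    _ = max C 1 * R ^ (d - 1) * ‖θ - w‖ := by ring

/-- Chains of resonant congruences which record the set of vectors `θ` used along the way. -/
inductive ResChain (B : Basis (Fin d) ℝ (EuclideanSpace ℝ (Fin d))) (ρ a r : ℝ) :
    Set (EuclideanSpace ℝ (Fin d)) → EuclideanSpace ℝ (Fin d) → EuclideanSpace ℝ (Fin d) → Prop
  | nil (ξ) : ResChain B ρ a r ∅ ξ ξ
  | cons {S ξ ζ η θ} (hθ : θ ∈ Theta0 B r) (h : ζ ∈ upsTheta ρ a θ ξ)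
      (hc : ResChain B ρ a r S ζ η) : ResChain B ρ a r (insert θ S) ξ η

section ResChain

variable {B : Basis (Fin d) ℝ (EuclideanSpace ℝ (Fin d))} {ρ a r : ℝ}
  {S : Set (EuclideanSpace ℝ (Fin d))} {ξ ζ η θ : EuclideanSpace ℝ (Fin d)}

lemma upsTheta_symm (h : ζ ∈ upsTheta ρ a θ ξ) : ξ ∈ upsTheta ρ a θ ζ := by
  obtain ⟨h1, h2, l, hl⟩ := h
  refine ⟨h2, h1, -l, ?_⟩
  rw [← neg_sub, hl]
  simp

lemma ResChain.snoc (hc : ResChain B ρ a r S ξ ζ) (hθ : θ ∈ Theta0 B r)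
    (h : η ∈ upsTheta ρ a θ ζ) : ResChain B ρ a r (insert θ S) ξ η := by
  induction hc with
  | nil ξ => exact .cons hθ h (.nil _)
  | cons hθ' h' _ ih =>
    rw [Set.insert_comm]
    exact .cons hθ' h' (ih h)

lemma ResChain.symm (hc : ResChain B ρ a r S ξ η) : ResChain B ρ a r S η ξ := by
  induction hc with
  | nil ξ => exact .nil ξ
  | cons hθ h _ ih => exact ih.snoc hθ (upsTheta_symm h)

lemma ResChain.subset (hc : ResChain B ρ a r S ξ η) : S ⊆ Theta0 B r := by
  induction hc with
  | nil ξ => exact Set.empty_subset _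
  | cons hθ _ _ ih => exact Set.insert_subset hθ ih

lemma ResChain.sub_mem_span (hc : ResChain B ρ a r S ξ η) : ξ - η ∈ Submodule.span ℝ S := by
  induction hc with
  | nil ξ => simp
  | @cons S ξ ζ η θ hθ h hc ih =>
    obtain ⟨-, -, l, hl⟩ := h
    rw [← sub_add_sub_cancel ξ ζ η, hl]
    exact Submodule.add_mem _
      (Submodule.smul_mem _ _ (Submodule.subset_span (Set.mem_insert _ _)))
      (Submodule.span_mono (Set.subset_insert _ _) ih)

lemma exists_resChain_of_mem_Ups (h : η ∈ Ups B ρ a r ξ) : ∃ S, ResChain B ρ a r S ξ η := by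
  induction h with
  | refl => exact ⟨∅, .nil ξ⟩
  | tail _ hs ih =>
    obtain ⟨S, hS⟩ := ih
    obtain ⟨θ, hθ, h⟩ := hs
    exact ⟨_, hS.snoc hθ h⟩

/-- The end point of a chain of congruences has a small projection onto the span of the vectors
used in the chain. -/
lemma ResChain.pairingBound {C R : ℝ} (hd : 1 ≤ d) (hρ : 0 ≤ ρ) (hC : 1 ≤ C) (hR : 1 ≤ R)
    (hrR : r ≤ R)
    (hdist : ∀ S ⊆ Theta0 B r, ∀ θ ∈ Theta0 B r, θ ∉ Submodule.span ℝ S →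
      ∀ w ∈ Submodule.span ℝ S, 1 ≤ C * R ^ (d - 1) * ‖θ - w‖) (k : ℕ)
    (hc : ResChain B ρ a r S ξ η) (hk : finrank ℝ (Submodule.span ℝ S) ≤ k) :
    PairingBound (Submodule.span ℝ S) ((8 * (C * R ^ d)) ^ k * ρ ^ a) η := by
  have hQ : 1 ≤ C * R ^ d := one_le_mul_of_one_le_of_one_le hC (one_le_pow₀ hR)
  induction k generalizing S ξ η with
  | zero =>
    have hbot : Submodule.span ℝ S = ⊥ := Submodule.finrank_eq_zero.1 (Nat.le_zero.1 hk)
    intro y hy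
    rw [hbot, Submodule.mem_bot] at hy
    simp [hy]
  | succ k ihk =>
    induction hc with
    | nil ξ =>
      intro y hy
      rw [Submodule.span_empty, Submodule.mem_bot] at hy
      simp [hy]
    | @cons S ξ ζ η θ hθ h hc ih =>
      by_cases hθS : θ ∈ Submodule.span ℝ S
      · rw [Submodule.span_insert_eq_span hθS] at hk ⊢
        exact ih hk
      have hlt : Submodule.span ℝ S < Submodule.span ℝ (insert θ S) :=
        lt_of_le_of_ne (Submodule.span_mono (Set.subset_insert _ _)) fun he =>
          hθS (he ▸ Submodule.subset_span (Set.mem_insert _ _))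
      have hkS : finrank ℝ (Submodule.span ℝ S) ≤ k := by
        have := Submodule.finrank_lt_finrank_of_lt hlt
        omega
      have hη := ihk hc hkS
      have hζ := ihk hc.symm hkS
      have hρa : 0 ≤ ρ ^ a := Real.rpow_nonneg hρ a
      have hpow : 1 ≤ (8 * (C * R ^ d)) ^ k := one_le_pow₀ (by linarith)
      set f := (8 * (C * R ^ d)) ^ k * ρ ^ a with hf
      have hf0 : 0 ≤ f := by positivity
      have hρf : ρ ^ a ≤ f := le_mul_of_one_le_left hρa hpow
      have hnorm : ‖ζ - η‖ ≤ 2 * f := hζ.norm_sub_le hf0 hη hc.sub_mem_span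
      have hθR : ‖θ‖ ≤ R := hθ.2.trans hrR
      have hζθ : |⟪ζ, θ⟫| ≤ ρ ^ a * R := by
        rcases h.2.1 with h0 | hl
        · exact absurd (h0 ▸ Submodule.zero_mem _) hθS
        · exact hl.le.trans (by gcongr)
      have hηθ : |⟪η, θ⟫| ≤ 3 * f * R := by
        have hsplit : ⟪η, θ⟫ = ⟪ζ, θ⟫ - ⟪ζ - η, θ⟫ := by rw [inner_sub_left]; ring
        calc |⟪η, θ⟫| ≤ |⟪ζ, θ⟫| + |⟪ζ - η, θ⟫| := hsplit ▸ abs_sub _ _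
          _ ≤ ρ ^ a * R + ‖ζ - η‖ * ‖θ‖ := add_le_add hζθ (abs_real_inner_le_norm _ _)
          _ ≤ f * R + (2 * f) * R := by gcongr
          _ = 3 * f * R := by ring
      refine (hη.span_insert hf0 hθR (by positivity)
        (hdist S hc.subset θ hθ hθS) hηθ).mono ?_
      have hRd : R ^ (d - 1) * R = R ^ d := by
        rw [← pow_succ, Nat.sub_add_cancel hd]
      calc f + C * R ^ (d - 1) * (3 * f * R + f * R)
          = f + 4 * (C * (R ^ (d - 1) * R)) * f := by ring
        _ = f + 4 * (C * R ^ d) * f := by rw [hRd]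
        _ ≤ 8 * (C * R ^ d) * f := by nlinarith
        _ = (8 * (C * R ^ d)) ^ (k + 1) * ρ ^ a := by rw [hf]; ring

end ResChain

/-- Resonant congruent points are close to each other. -/
lemma exists_norm_sub_le_of_mem_Ups (hd : 1 ≤ d)
    (B : Basis (Fin d) ℝ (EuclideanSpace ℝ (Fin d))) :
    ∃ C : ℝ, 1 ≤ C ∧ ∀ ρ r κ a : ℝ, 1 ≤ ρ → 0 < κ → r ≤ ρ ^ κ →
      Submodule.span ℝ (Theta0 B r) = ⊤ → ∀ ξ, ∀ η ∈ Ups B ρ a r ξ,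
        ‖η - ξ‖ ≤ C * ρ ^ (a + κ * (d : ℝ) ^ 2) := by
  obtain ⟨C, hC, hdist⟩ := exists_one_le_mul_norm_sub B
  refine ⟨2 * (8 * C) ^ d, ?_, ?_⟩
  · have : 1 ≤ (8 * C) ^ d := one_le_pow₀ (by linarith)
    linarith
  intro ρ r κ a hρ hκ hr hspan ξ η hη
  obtain ⟨S, hS⟩ := exists_resChain_of_mem_Ups hη
  have hρ0 : 0 < ρ := by linarith
  have hR : 1 ≤ ρ ^ κ := Real.one_le_rpow hρ hκ.le
  have hk : finrank ℝ (Submodule.span ℝ S) ≤ d := by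
    simpa using Submodule.finrank_le (Submodule.span ℝ S)
  have hd' := hdist r (ρ ^ κ) hr hR hspan
  have h1 := hS.pairingBound hd hρ0.le hC hR hr hd' d hk
  have h2 := hS.symm.pairingBound hd hρ0.le hC hR hr hd' d hk
  have h3 := h1.norm_sub_le (by positivity) h2 hS.symm.sub_mem_span
  refine h3.trans_eq ?_
  have hpow : ((ρ ^ κ) ^ d) ^ d = ρ ^ (κ * (d : ℝ) ^ 2) := by
    rw [← pow_mul, ← Real.rpow_natCast, ← Real.rpow_mul hρ0.le]
    push_cast
    ring_nf
  rw [Real.rpow_add hρ0, ← hpow]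
  ring

/-- Lemma 5.10: for sufficiently large ρ, if V ∈ 𝒱(r,n) with 1 ≤ n ≤ d and
ξ ∈ Ξ₂(V), then |ξ_V| ≤ 2ρ^{(α₁+α₂)/2} when n = 1 and |ξ_V| ≤ 2ρ^{α_n} when 2 ≤ n ≤ d. -/
theorem proj_bound_on_Xi2
    (d : ℕ) (hd : 2 ≤ d) (B : Basis (Fin d) ℝ (EuclideanSpace ℝ (Fin d)))
    (κ : ℝ) (α : ℕ → ℝ) :
    ∃ ρ₀ : ℝ, ∀ ρ r : ℝ, ρ₀ ≤ ρ → GoodParams B ρ r κ α →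
      ∀ n : ℕ, 1 ≤ n → n ≤ d →
      ∀ V : Submodule ℝ (EuclideanSpace ℝ (Fin d)), IsLatticeSubspace B r V →
        Module.finrank ℝ V = n →
      ∀ ξ ∈ Xi2 B ρ r α V,
        (n = 1 → ‖projV V ξ‖ ≤ 2 * ρ ^ ((α 1 + α 2) / 2)) ∧
        (2 ≤ n → ‖projV V ξ‖ ≤ 2 * ρ ^ α n) := by
  obtain ⟨C, hC, hdiam⟩ := exists_norm_sub_le_of_mem_Ups (by omega : 1 ≤ d) B
  by_cases hε : α 1 + κ * (d : ℝ) ^ 2 < (α 1 + α 2) / 2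
  swap
  · refine ⟨0, fun ρ r _ hG => absurd ?_ hε⟩
    have := hG.2.2.2.1 1 (by omega)
    norm_num at this
    linarith
  obtain ⟨ρ₀, hρ₀⟩ := Filter.eventually_atTop.1
    ((tendsto_rpow_atTop (sub_pos.2 hε)).eventually_ge_atTop C)
  refine ⟨ρ₀, ?_⟩
  rintro ρ r hρρ₀ ⟨hρ, hκ, -, hα, -, hr, hspan⟩ n hn hnd V - hVn ξ ⟨η, hη, hξη⟩
  have hρ0 : 0 < ρ := by linarith
  have hmid : ‖ξ - η‖ ≤ ρ ^ ((α 1 + α 2) / 2) := by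
    calc ‖ξ - η‖ ≤ C * ρ ^ (α 1 + κ * (d : ℝ) ^ 2) :=
          hdiam ρ r κ (α 1) hρ hκ hr hspan η ξ hξη
      _ ≤ ρ ^ ((α 1 + α 2) / 2 - (α 1 + κ * (d : ℝ) ^ 2)) * ρ ^ (α 1 + κ * (d : ℝ) ^ 2) := by
          gcongr
          exact hρ₀ ρ hρρ₀
      _ = ρ ^ ((α 1 + α 2) / 2) := by rw [← Real.rpow_add hρ0, sub_add_cancel]
  have hη' : ‖projV V η‖ < ρ ^ α n := hVn ▸ hη
  have hproj : ‖projV V ξ‖ ≤ ρ ^ α n + ρ ^ ((α 1 + α 2) / 2) := by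
    have hadd : projV V ξ = projV V η + projV V (ξ - η) := by
      simp only [projV, map_sub, Submodule.coe_sub, add_sub_cancel]
    have hle : ‖projV V (ξ - η)‖ ≤ ‖ξ - η‖ := V.norm_orthogonalProjectionOnto_apply_le (ξ - η)
    rw [hadd]
    exact (norm_add_le _ _).trans (add_le_add hη'.le (hle.trans hmid))
  have hκd : 0 < κ * (d : ℝ) ^ 2 := by
    have : (0 : ℝ) < d := by exact_mod_cast (by omega : 0 < d)
    positivity
  constructor
  · rintro rfl
    have : ρ ^ α 1 ≤ ρ ^ ((α 1 + α 2) / 2) := Real.rpow_le_rpow_of_exponent_le hρ (by linarith)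
    linarith
  · intro h2
    have hα2 : α 2 ≤ α n := by
      clear * - h2 hα hnd hκd
      induction n, h2 using Nat.le_induction with
      | base => exact le_rfl
      | succ m hm ih =>
        have := hα m (by omega)
        have := ih (by omega)
        linarith
    have : ρ ^ ((α 1 + α 2) / 2) ≤ ρ ^ α n := Real.rpow_le_rpow_of_exponent_le hρ (by linarith)
    linarith
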